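/- arXiv:1412.0646 — 2 statements merged into one kernel-verified Lean document; each statement's English description precedes it below -/
import Mathlib

section
/- Let π, ρ be permutations of a finite set I. The following are equivalent: (1) π and ρ have a common upper bound in the noncrossing partial order ⪯; (2) they have a common upper bound σ with Π(σ) = Π(π) ∨ Π(ρ); (3) they have a common upper bound lying on a geodesic between π and ρ in the Cayley graph generated by transpositions; (4) #(π) + #(ρ) + #(ρπ⁻¹) − |I| = 2·#(Π(π) ∨ Π(ρ)) (i.e., π is planar on ρ⁻¹). -/
/-- The number of cycles (orbits, including fixed points) of a permutation. -/
noncomputable def cycleCount {I : Type*} (σ : Equiv.Perm I) : ℕ :=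
  Nat.card (MulAction.orbitRel.Quotient (Subgroup.zpowers σ) I)

/-- The number of blocks of the join of the orbit partitions of two permutations. -/
noncomputable def jointOrbitCount {I : Type*} (π₁ π₂ : Equiv.Perm I) : ℕ :=
  Nat.card (MulAction.orbitRel.Quotient
    (Subgroup.closure {π₁, π₂} : Subgroup (Equiv.Perm I)) I)

/-- The distance in the Cayley graph of the symmetric group with all
transpositions as generators: d(π,ρ) = |I| − #(ρπ⁻¹). -/
noncomputable def cayleyDist {I : Type*} [Fintype I] (π ρ : Equiv.Perm I) : ℕ :=
  Fintype.card I - cycleCount (ρ * π⁻¹)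

/-- The noncrossing partial order: π ⪯ ρ iff π lies on a geodesic from the
identity to ρ. -/
def NCLe {I : Type*} [Fintype I] (π ρ : Equiv.Perm I) : Prop :=
  cayleyDist 1 π + cayleyDist π ρ = cayleyDist 1 ρ

namespace NCProof

open Equiv Equiv.Perm

/-- The orbit setoid of a permutation. -/
abbrev R {I : Type*} (σ : Perm I) : Setoid I := SameCycle.setoid σ

/-- Merge the classes of two points. -/
def merge {I : Type*} (r : Setoid I) (a b : I) : Setoid I where
  r x y := r x y ∨ (r x a ∧ r y b) ∨ (r x b ∧ r y a)
  iseqv := by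
    have hs : ∀ {x y}, r x y → r y x := fun h => r.symm' h
    have ht : ∀ {x y z}, r x y → r y z → r x z := fun h h' => r.trans' h h'
    refine ⟨fun x => Or.inl (r.refl' x), ?_, ?_⟩
    · rintro x y (h | ⟨h, h'⟩ | ⟨h, h'⟩)
      · exact Or.inl (hs h)
      · exact Or.inr (Or.inr ⟨h', h⟩)
      · exact Or.inr (Or.inl ⟨h', h⟩)
    · rintro x y z (h | ⟨h, h'⟩ | ⟨h, h'⟩) (k | ⟨k, k'⟩ | ⟨k, k'⟩)
      · exact Or.inl (ht h k)
      · exact Or.inr (Or.inl ⟨ht h k, k'⟩)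
      · exact Or.inr (Or.inr ⟨ht h k, k'⟩)
      · exact Or.inr (Or.inl ⟨h, ht (hs k) h'⟩)
      · exact Or.inl (ht h (ht (hs k) (ht h' (hs k'))))
      · exact Or.inl (ht h (hs k'))
      · exact Or.inr (Or.inr ⟨h, ht (hs k) h'⟩)
      · exact Or.inl (ht h (hs k'))
      · exact Or.inl (ht h (ht (hs k) (ht h' (hs k'))))

lemma merge_def {I : Type*} (r : Setoid I) (a b x y : I) :
    merge r a b x y ↔ r x y ∨ (r x a ∧ r y b) ∨ (r x b ∧ r y a) := Iff.rfl

lemma le_merge {I : Type*} (r : Setoid I) (a b : I) : r ≤ merge r a b :=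
  fun _ _ h => Or.inl h

lemma merge_self {I : Type*} (r : Setoid I) (a b : I) : merge r a b a b :=
  Or.inr (Or.inl ⟨r.refl' a, r.refl' b⟩)

lemma merge_le {I : Type*} {r s : Setoid I} {a b : I} (h : r ≤ s) (hab : s a b) :
    merge r a b ≤ s := by
  rintro x y (k | ⟨k, k'⟩ | ⟨k, k'⟩)
  · exact h k
  · exact s.trans' (h k) (s.trans' hab (s.symm' (h k')))
  · exact s.trans' (h k) (s.trans' (s.symm' hab) (s.symm' (h k')))

lemma merge_eq_self {I : Type*} {r : Setoid I} {a b : I} (hab : r a b) : merge r a b = r :=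
  le_antisymm (merge_le le_rfl hab) (le_merge r a b)

lemma merge_sup {I : Type*} (r s : Setoid I) (a b : I) :
    merge r a b ⊔ s = merge (r ⊔ s) a b := by
  apply le_antisymm
  · refine sup_le (merge_le (le_sup_left.trans (le_merge _ _ _)) (merge_self _ _ _))
      (le_sup_right.trans (le_merge _ _ _))
  · refine merge_le (sup_le_sup_right (le_merge _ _ _) _) ?_
    exact (le_sup_left : merge r a b ≤ merge r a b ⊔ s) (merge_self r a b)

/-- number of classes -/
noncomputable def cnt {I : Type*} (r : Setoid I) : ℕ := Nat.card (Quotient r)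

lemma cnt_merge {I : Type*} [Fintype I] {r : Setoid I} {a b : I} (hab : ¬ r a b) :
    cnt r = cnt (merge r a b) + 1 := by
  classical
  have e : {q : Quotient r // q ≠ ⟦b⟧} ≃ Quotient (merge r a b) := by
    refine Equiv.ofBijective
      (fun q => Quotient.map' (s₂ := merge r a b) id (fun x y h => le_merge r a b h) q.1) ⟨?_, ?_⟩
    · rintro ⟨q, hq⟩ ⟨q', hq'⟩ h
      induction q using Quotient.inductionOn with | _ x
      induction q' using Quotient.inductionOn with | _ y
      have hx : ¬ r x b := fun h => hq (Quotient.sound h)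
      have hy : ¬ r y b := fun h => hq' (Quotient.sound h)
      have h' : merge r a b x y := Quotient.exact h
      rcases h' with k | ⟨k, k'⟩ | ⟨k, k'⟩
      · exact Subtype.ext (Quotient.sound k)
      · exact absurd k' hy
      · exact absurd k hx
    · intro q
      induction q using Quotient.inductionOn with | _ x
      by_cases hx : r x b
      · refine ⟨⟨⟦a⟧, fun h => hab (Quotient.exact h)⟩, ?_⟩
        exact Quotient.sound (s := merge r a b) (Or.inr (Or.inl ⟨r.refl' a, hx⟩))
      · exact ⟨⟨⟦x⟧, fun h => hx (Quotient.exact h)⟩, rfl⟩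
  have : Finite (Quotient r) := Quotient.finite r
  have := Fintype.ofFinite (Quotient r)
  unfold cnt
  rw [← Nat.card_congr e, Nat.card_eq_fintype_card, Nat.card_eq_fintype_card,
    Fintype.card_subtype_compl, Fintype.card_subtype_eq]
  have : 0 < Fintype.card (Quotient r) := Fintype.card_pos_iff.2 ⟨⟦a⟧⟩
  omega

lemma cnt_le_merge {I : Type*} [Fintype I] (r : Setoid I) (a b : I) :
    cnt r ≤ cnt (merge r a b) + 1 := by
  by_cases h : r a b
  · rw [merge_eq_self h]; omega
  · exact (cnt_merge h).le

lemma cnt_bot {I : Type*} [Fintype I] {r : Setoid I} (h : r = ⊥) : cnt r = Fintype.card I := by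
  subst h
  unfold cnt
  rw [← Nat.card_eq_fintype_card]
  exact (Nat.card_congr (Equiv.ofBijective (fun x : I => (Quotient.mk ⊥ x))
    ⟨fun x y h => Quotient.exact h, Quotient.mk_surjective⟩)).symm

lemma cnt_le_card {I : Type*} [Fintype I] (r : Setoid I) : cnt r ≤ Fintype.card I := by
  rw [← Nat.card_eq_fintype_card]
  exact Nat.card_le_card_of_surjective (Quotient.mk r) Quotient.mk_surjective

lemma R_le_iff {I : Type*} {σ : Perm I} {s : Setoid I} : R σ ≤ s ↔ ∀ x, s x (σ x) := by
  constructor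
  · intro h x
    exact h (show SameCycle σ x (σ x) from ⟨1, by simp⟩)
  · intro h
    have hz : ∀ (n : ℕ) x, s x ((σ ^ n) x) := by
      intro n
      induction n with
      | zero => intro x; exact s.refl' x
      | succ n ih =>
        intro x
        rw [pow_succ', Perm.mul_apply]
        exact s.trans' (ih x) (h _)
    rintro x y ⟨i, rfl⟩
    obtain ⟨n, rfl | rfl⟩ := i.eq_nat_or_neg
    · exact_mod_cast hz n x
    · have := hz n ((σ ^ (-(n:ℤ))) x)
      rw [← Perm.mul_apply] at this
      simp at this
      apply s.symm'
      simpa using this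

lemma R_apply {I : Type*} (σ : Perm I) (x : I) : R σ x (σ x) :=
  (R_le_iff.1 le_rfl) x

lemma orbitRel_zpowers {I : Type*} (σ : Perm I) :
    MulAction.orbitRel (Subgroup.zpowers σ) I = R σ := by
  apply le_antisymm
  · intro x y h
    obtain ⟨⟨g, k, rfl⟩, rfl⟩ := h
    exact (R σ).symm' ⟨k, rfl⟩
  · rw [R_le_iff]
    intro x
    refine Setoid.symm' _ ⟨⟨σ, Subgroup.mem_zpowers σ⟩, rfl⟩

lemma orbitRel_closure {I : Type*} (π ρ : Perm I) :
    MulAction.orbitRel (Subgroup.closure {π, ρ} : Subgroup (Perm I)) I = R π ⊔ R ρ := by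
  apply le_antisymm
  · have key : ∀ g ∈ Subgroup.closure {π, ρ}, ∀ x, (R π ⊔ R ρ) x (g x) := by
      intro g hg
      induction hg using Subgroup.closure_induction with
      | mem g hg =>
        intro x
        rcases hg with rfl | rfl
        · exact (le_sup_left : R g ≤ R g ⊔ R ρ) (R_apply g x)
        · exact (le_sup_right : R g ≤ R π ⊔ R g) (R_apply g x)
      | one => intro x; exact Setoid.refl' _ x
      | mul g h _ _ ihg ihh =>
        intro x
        exact Setoid.trans' _ (ihh x) (ihg (h x))
      | inv g _ ih =>
        intro x
        have := ih (g⁻¹ x)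
        simp only [Perm.inv_def, Equiv.apply_symm_apply] at this
        exact Setoid.symm' _ this
    intro x y h
    obtain ⟨⟨g, hg⟩, rfl⟩ := h
    exact Setoid.symm' _ (key g hg y)
  · refine sup_le (R_le_iff.2 fun x => ?_) (R_le_iff.2 fun x => ?_)
    · exact Setoid.symm' _ ⟨⟨π, Subgroup.subset_closure (by simp)⟩, rfl⟩
    · exact Setoid.symm' _ ⟨⟨ρ, Subgroup.subset_closure (by simp)⟩, rfl⟩

lemma cycleCount_eq {I : Type*} (σ : Perm I) : cycleCount σ = cnt (R σ) := by
  unfold cycleCount cnt MulAction.orbitRel.Quotient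
  rw [orbitRel_zpowers]

lemma jointOrbitCount_eq {I : Type*} (π ρ : Perm I) :
    jointOrbitCount π ρ = cnt (R π ⊔ R ρ) := by
  unfold jointOrbitCount cnt MulAction.orbitRel.Quotient
  rw [orbitRel_closure]

/-- First return to `{a,b}`. -/
lemma first_hit {I : Type*} [Fintype I] [DecidableEq I] (σ : Perm I) (a b : I) :
    ∃ k : ℕ, 0 < k ∧ ((σ ^ k) a = a ∨ (σ ^ k) a = b) ∧
      (∀ i, 0 < i → i < k → (σ ^ i) a ≠ a ∧ (σ ^ i) a ≠ b) ∧
      (∀ i, i < k → ((swap a b * σ) ^ i) a = (σ ^ i) a) ∧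
      ((swap a b * σ) ^ k) a = swap a b ((σ ^ k) a) := by
  have hex : ∃ k : ℕ, 0 < k ∧ ((σ ^ k) a = a ∨ (σ ^ k) a = b) :=
    ⟨orderOf σ, orderOf_pos σ, Or.inl (by rw [pow_orderOf_eq_one]; rfl)⟩
  classical
  obtain ⟨h0, h1⟩ := Nat.find_spec hex
  have hmin := fun i => Nat.find_min hex (m := i)
  set k := Nat.find hex
  have hA : ∀ i, 0 < i → i < k → (σ ^ i) a ≠ a ∧ (σ ^ i) a ≠ b := by
    intro i hi hk
    have := hmin i hk
    tauto
  have hB : ∀ i, i < k → ((swap a b * σ) ^ i) a = (σ ^ i) a := by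
    intro i
    induction i with
    | zero => intro _; rfl
    | succ i ih =>
      intro hi
      rw [pow_succ', Perm.mul_apply, ih (by omega), Perm.mul_apply, ← Perm.mul_apply σ, ← pow_succ']
      exact swap_apply_of_ne_of_ne (hA _ (by omega) hi).1 (hA _ (by omega) hi).2
  refine ⟨k, h0, h1, hA, hB, ?_⟩
  obtain ⟨j, hj⟩ : ∃ j, k = j + 1 := ⟨k - 1, by omega⟩
  rw [hj, pow_succ', Perm.mul_apply, hB j (by omega), Perm.mul_apply, ← Perm.mul_apply σ,
    ← pow_succ']

lemma same_of_not {I : Type*} [Fintype I] [DecidableEq I] {σ : Perm I} {a b : I}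
    (h : ¬ R σ a b) : R (swap a b * σ) a b := by
  obtain ⟨k, h0, h1, hA, hB, hk⟩ := first_hit σ a b
  have h2 : (σ ^ k) a = a := by
    rcases h1 with h1 | h1
    · exact h1
    · exact absurd (show SameCycle σ a b from ⟨k, by simpa using h1⟩) h
  rw [h2, swap_apply_left] at hk
  exact ⟨k, by simpa using hk⟩

/-- If the orbit returns to `a` at time `k` avoiding `b`, it never meets `b`. -/
lemma not_same_of_return {I : Type*} {σ : Perm I} {a b : I} {k : ℕ} (h0 : 0 < k)
    (hk : (σ ^ k) a = a) (hb : ∀ i, i < k → (σ ^ i) a ≠ b) : ¬ R σ a b := by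
  rintro ⟨i, hi⟩
  have hz : ∀ m : ℤ, (σ ^ ((k : ℤ) * m)) a = a := by
    intro m
    rw [zpow_mul]
    exact Equiv.Perm.zpow_apply_eq_self_of_apply_eq_self (by simpa using hk) m
  have hkz : (0 : ℤ) < k := by exact_mod_cast h0
  have h1 : (σ ^ (i % k)) a = b := by
    rw [← hi]
    conv_rhs => rw [← Int.emod_add_mul_ediv i k, zpow_add, Perm.mul_apply, hz]
  have h2 : 0 ≤ i % k := Int.emod_nonneg _ hkz.ne'
  have h3 : i % k < k := Int.emod_lt_of_pos _ hkz
  refine hb (i % k).toNat (by omega) ?_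
  rw [← h1, ← zpow_natCast, Int.toNat_of_nonneg h2]

lemma not_same_of_same {I : Type*} [Fintype I] [DecidableEq I] {σ : Perm I} {a b : I}
    (hne : a ≠ b) (h : R σ a b) : ¬ R (swap a b * σ) a b := by
  obtain ⟨k, h0, h1, hA, hB, hk⟩ := first_hit σ a b
  have hb : ∀ i, i < k → (σ ^ i) a ≠ b := by
    intro i hi
    rcases Nat.eq_zero_or_pos i with rfl | hp
    · simpa using hne
    · exact (hA i hp hi).2
  rcases h1 with h1 | h1
  · exact absurd h (not_same_of_return h0 h1 hb)
  · rw [h1, swap_apply_right] at hk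
    exact not_same_of_return h0 hk (fun i hi => by rw [hB i hi]; exact hb i hi)

lemma R_swap_mul {I : Type*} [Fintype I] [DecidableEq I] {σ : Perm I} {a b : I}
    (h : ¬ R σ a b) : R (swap a b * σ) = merge (R σ) a b := by
  have key : ∀ (s : Setoid I), s a b → ∀ z, s z (swap a b z) := by
    intro s hs z
    by_cases h1 : z = a
    · subst h1; rw [swap_apply_left]; exact hs
    by_cases h2 : z = b
    · subst h2; rw [swap_apply_right]; exact s.symm' hs
    rw [swap_apply_of_ne_of_ne h1 h2]
  apply le_antisymm
  · rw [R_le_iff]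
    intro x
    exact Setoid.trans' _ (le_merge (R σ) a b (R_apply σ x)) (key _ (merge_self _ _ _) _)
  · refine merge_le (R_le_iff.2 fun x => ?_) (same_of_not h)
    have h1 := R_apply (swap a b * σ) x
    have h2 := key _ (same_of_not h) ((swap a b * σ) x)
    have h3 := Setoid.trans' _ h1 h2
    simpa using h3

lemma R_inv {I : Type*} (σ : Perm I) : R σ⁻¹ = R σ := by
  ext x y
  exact sameCycle_inv

/-- cycle count -/
noncomputable abbrev c {I : Type*} (σ : Perm I) : ℕ := cnt (R σ)

lemma c_inv {I : Type*} (σ : Perm I) : c σ⁻¹ = c σ := by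
  unfold c
  rw [R_inv]

lemma c_one {I : Type*} [Fintype I] : c (1 : Perm I) = Fintype.card I := by
  apply cnt_bot
  ext x y
  exact sameCycle_one

lemma c_join {I : Type*} [Fintype I] [DecidableEq I] {σ : Perm I} {a b : I}
    (h : ¬ R σ a b) : c σ = c (swap a b * σ) + 1 := by
  unfold c
  rw [R_swap_mul h]
  exact cnt_merge h

lemma c_split {I : Type*} [Fintype I] [DecidableEq I] {σ : Perm I} {a b : I}
    (hne : a ≠ b) (h : R σ a b) : c (swap a b * σ) = c σ + 1 := by
  have := c_join (not_same_of_same hne h)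
  rwa [swap_mul_self_mul] at this

lemma c_mul_swap {I : Type*} [DecidableEq I] (σ : Perm I) (a b : I) :
    c (σ * swap a b) = c (swap a b * σ⁻¹) := by
  rw [← c_inv, mul_inv_rev, swap_inv]

lemma c_join' {I : Type*} [Fintype I] [DecidableEq I] {σ : Perm I} {a b : I}
    (h : ¬ R σ a b) : c σ = c (σ * swap a b) + 1 := by
  rw [c_mul_swap, ← c_inv σ]
  exact c_join (by rwa [R_inv])

lemma c_split' {I : Type*} [Fintype I] [DecidableEq I] {σ : Perm I} {a b : I}
    (hne : a ≠ b) (h : R σ a b) : c (σ * swap a b) = c σ + 1 := by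
  rw [c_mul_swap, ← c_inv σ]
  exact c_split hne (by rwa [R_inv])

lemma c_le_swap {I : Type*} [Fintype I] [DecidableEq I] (σ : Perm I) (a b : I) :
    c σ ≤ c (swap a b * σ) + 1 := by
  by_cases hne : a = b
  · subst hne
    rw [swap_self]
    show c σ ≤ c (1 * σ) + 1
    rw [one_mul]
    omega
  by_cases h : R σ a b
  · rw [c_split hne h]; omega
  · exact (c_join h).le

lemma exists_moved {I : Type*} {τ : Perm I} (h : τ ≠ 1) : ∃ a, a ≠ τ a := by
  by_contra! hh
  exact h (Perm.ext fun x => (hh x).symm)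

/-- Subadditivity of the length. -/
lemma c_mul {I : Type*} [Fintype I] (k : ℕ) : ∀ τ π : Perm I, Fintype.card I = c τ + k →
    c τ + c π ≤ Fintype.card I + c (τ * π) := by
  classical
  induction k with
  | zero =>
    intro τ π h
    by_cases h1 : τ = 1
    · subst h1; rw [one_mul, c_one]
    · obtain ⟨a, ha⟩ := exists_moved h1
      have := c_split' ha (R_apply τ a)
      have : c (τ * swap a (τ a)) ≤ _ := cnt_le_card _
      omega
  | succ k ih =>
    intro τ π h
    by_cases h1 : τ = 1
    · subst h1; rw [one_mul, c_one]
    · obtain ⟨a, ha⟩ := exists_moved h1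
      have h2 := c_split' ha (R_apply τ a)
      have h3 := ih (τ * swap a (τ a)) (swap a (τ a) * π) (by omega)
      rw [mul_assoc, swap_mul_self_mul] at h3
      have h4 := c_le_swap π a (τ a)
      omega

/-- The Euler defect. -/
noncomputable def delta {I : Type*} [Fintype I] (π ρ : Perm I) : ℤ :=
  Fintype.card I + 2 * cnt (R π ⊔ R ρ) - c π - c ρ - c (ρ * π⁻¹)

lemma delta_comm {I : Type*} [Fintype I] (π ρ : Perm I) : delta π ρ = delta ρ π := by
  unfold delta
  rw [sup_comm, ← c_inv (ρ * π⁻¹), mul_inv_rev, inv_inv]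
  ring

lemma R_mul_le {I : Type*} {σ τ : Perm I} {s : Setoid I} (h1 : R σ ≤ s) (h2 : R τ ≤ s) :
    R (σ * τ) ≤ s := by
  rw [R_le_iff] at *
  intro x
  exact s.trans' (h2 x) (h1 (τ x))

lemma delta_step {I : Type*} [Fintype I] [DecidableEq I] (π ρ : Perm I) {a b : I}
    (h : ¬ R π a b) : delta π ρ ≤ delta (swap a b * π) ρ := by
  have h1 := c_join h
  have h2 : ρ * (swap a b * π)⁻¹ = (ρ * π⁻¹) * swap a b := by
    rw [mul_inv_rev, swap_inv, mul_assoc]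
  have h3 : R (swap a b * π) ⊔ R ρ = merge (R π ⊔ R ρ) a b := by
    rw [R_swap_mul h, merge_sup]
  unfold delta
  rw [h2, h3]
  by_cases hJ : (R π ⊔ R ρ) a b
  · rw [merge_eq_self hJ]
    have h4 := c_le_swap (ρ * π⁻¹)⁻¹ a b
    rw [← c_mul_swap, c_inv] at h4
    have h5 : c (ρ * π⁻¹ * swap a b) ≤ c (ρ * π⁻¹) + 1 := by
      have h4 := c_le_swap (swap a b * (ρ * π⁻¹)⁻¹) a b
      rw [swap_mul_self_mul, ← c_mul_swap, c_inv] at h4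
      exact h4
    omega
  · have h4 := cnt_merge hJ
    have h5 : ¬ R (ρ * π⁻¹) a b := fun hh =>
      hJ (R_mul_le (le_sup_right) (by rw [R_inv]; exact le_sup_left) hh)
    have h6 := c_join' h5
    omega

/-- Noncrossing order in additive form. -/
lemma NCLe_iff {I : Type*} [Fintype I] (π σ : Perm I) :
    NCLe π σ ↔ c π + c (σ * π⁻¹) = Fintype.card I + c σ := by
  unfold NCLe cayleyDist
  rw [cycleCount_eq, cycleCount_eq, cycleCount_eq, inv_one, mul_one, mul_one]
  have h1 := cnt_le_card (R π)
  have h2 := cnt_le_card (R σ)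
  have h3 := cnt_le_card (R (σ * π⁻¹))
  unfold c
  omega

lemma delta_mono {I : Type*} [Fintype I] (ρ : Perm I) (k : ℕ) :
    ∀ τ π : Perm I, Fintype.card I = c τ + k → c π + c τ = Fintype.card I + c (τ * π) →
    delta π ρ ≤ delta (τ * π) ρ := by
  classical
  induction k with
  | zero =>
    intro τ π h _
    by_cases h1 : τ = 1
    · subst h1; rw [one_mul]
    · obtain ⟨a, ha⟩ := exists_moved h1
      have := c_split' ha (R_apply τ a)
      have : c (τ * swap a (τ a)) ≤ _ := cnt_le_card _
      omega
  | succ k ih =>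
    intro τ π h hnc
    by_cases h1 : τ = 1
    · subst h1; rw [one_mul]
    · obtain ⟨a, ha⟩ := exists_moved h1
      have h2 := c_split' ha (R_apply τ a)
      have h3 := c_mul k (τ * swap a (τ a)) (swap a (τ a) * π) (by omega)
      have h5 := ih (τ * swap a (τ a)) (swap a (τ a) * π) (by omega)
      rw [mul_assoc, swap_mul_self_mul] at h3 h5
      have h4 : ¬ R π a (τ a) := by
        intro hh
        have := c_split ha hh
        omega
      have h6 := c_join h4
      exact (delta_step π ρ h4).trans (h5 (by omega))

lemma delta_mono' {I : Type*} [Fintype I] {π σ : Perm I} (ρ : Perm I) (h : NCLe π σ) :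
    delta π ρ ≤ delta σ ρ := by
  rw [NCLe_iff] at h
  have h1 := cnt_le_card (R (σ * π⁻¹))
  have := delta_mono ρ (Fintype.card I - c (σ * π⁻¹)) (σ * π⁻¹) π (by unfold c; omega)
  rw [inv_mul_cancel_right] at this
  exact this h

lemma delta_self {I : Type*} [Fintype I] (σ : Perm I) : delta σ σ = 0 := by
  unfold delta
  rw [sup_idem, mul_inv_cancel, c_one]
  unfold c
  ring

lemma delta_one {I : Type*} [Fintype I] (σ : Perm I) : delta 1 σ = 0 := by
  have h : R (1 : Perm I) ≤ R σ := R_le_iff.2 fun x => Setoid.refl' _ x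
  unfold delta
  rw [sup_eq_right.2 h, inv_one, mul_one, c_one]
  unfold c
  ring

lemma delta_nonneg {I : Type*} [Fintype I] (π ρ : Perm I) : 0 ≤ delta π ρ := by
  rw [← delta_one ρ]
  apply delta_mono'
  rw [NCLe_iff, inv_one, mul_one, c_one]

lemma NCLe_trans {I : Type*} [Fintype I] {π σ τ : Perm I} (h : NCLe π σ) (h' : NCLe σ τ) :
    NCLe π τ := by
  rw [NCLe_iff] at *
  have h1 := c_mul (Fintype.card I - c (τ * σ⁻¹)) (τ * σ⁻¹) (σ * π⁻¹)
    (by have : c (τ * σ⁻¹) ≤ _ := cnt_le_card _; omega)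
  have h2 := c_mul (Fintype.card I - c (τ * π⁻¹)) (τ * π⁻¹) π
    (by have : c (τ * π⁻¹) ≤ _ := cnt_le_card _; omega)
  have e : τ * σ⁻¹ * (σ * π⁻¹) = τ * π⁻¹ := by group
  rw [e] at h1
  rw [inv_mul_cancel_right] at h2
  omega

lemma c_swap {I : Type*} [Fintype I] [DecidableEq I] {a b : I} (hne : a ≠ b) :
    Fintype.card I = c (swap a b) + 1 := by
  have := c_join (σ := (1 : Perm I)) (a := a) (b := b)
    (fun h => hne (sameCycle_one.1 h))
  rwa [c_one, mul_one] at this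

/-- Completion of `π` towards `ρ`. -/
lemma exists_completion {I : Type*} [Fintype I] (ρ : Perm I) (k : ℕ) :
    ∀ π : Perm I, c π = k → ∃ σ, NCLe π σ ∧ R σ = R π ⊔ R ρ ∧ delta σ ρ = delta π ρ := by
  classical
  induction k with
  | zero =>
    intro π hk
    refine ⟨π, ?_, ?_, rfl⟩
    · rw [NCLe_iff, mul_inv_cancel, c_one]; omega
    · have : IsEmpty I := by
        by_contra hne
        rw [not_isEmpty_iff] at hne
        obtain ⟨x⟩ := hne
        have : Finite (Quotient (R π)) := Quotient.finite _
        have : Nonempty (Quotient (R π)) := ⟨⟦x⟧⟩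
        have : 0 < Nat.card (Quotient (R π)) := Nat.card_pos
        unfold c cnt at hk
        omega
      ext x
      exact isEmptyElim x
  | succ k ih =>
    intro π hk
    by_cases hall : R (ρ * π⁻¹) ≤ R π
    · refine ⟨π, ?_, ?_, rfl⟩
      · rw [NCLe_iff, mul_inv_cancel, c_one]; omega
      · have : R ρ ≤ R π := by
          have := R_mul_le hall (le_refl (R π))
          rwa [inv_mul_cancel_right] at this
        exact (sup_eq_left.2 this).symm
    · rw [R_le_iff] at hall
      push Not at hall
      obtain ⟨y, hy⟩ := hall
      set κ := ρ * π⁻¹ with hκ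
      have hne : y ≠ κ y := fun h => hy (by rw [← h])
      have h1 := c_join hy
      have h2 := c_split' hne (R_apply κ y)
      have hJ : (R π ⊔ R ρ) y (κ y) :=
        R_mul_le (le_sup_right) (by rw [R_inv]; exact le_sup_left) (R_apply κ y)
      have h3 : R (swap y (κ y) * π) ⊔ R ρ = R π ⊔ R ρ := by
        rw [R_swap_mul hy, merge_sup, merge_eq_self hJ]
      obtain ⟨σ, hs1, hs2, hs3⟩ := ih (swap y (κ y) * π) (by omega)
      refine ⟨σ, NCLe_trans ?_ hs1, hs2.trans h3, hs3.trans ?_⟩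
      · rw [NCLe_iff, mul_inv_cancel_right]
        have := c_swap hne
        omega
      · unfold delta
        have e : ρ * (swap y (κ y) * π)⁻¹ = κ * swap y (κ y) := by
          rw [mul_inv_rev, swap_inv, ← mul_assoc]
        rw [h3, e, ← hκ]
        omega

end NCProof

open NCProof in
theorem stmt10 {I : Type*} [Fintype I] (π ρ : Equiv.Perm I) :
    List.TFAE
      [ -- (1) π and ρ have a common upper bound:
        ∃ σ, NCLe π σ ∧ NCLe ρ σ,
        -- (2) a common upper bound σ with Π(σ) = Π(π) ∨ Π(ρ):
        ∃ σ, NCLe π σ ∧ NCLe ρ σ ∧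
          ∀ x y : I, σ.SameCycle x y ↔
            y ∈ MulAction.orbit (Subgroup.closure {π, ρ} : Subgroup (Equiv.Perm I)) x,
        -- (3) a common upper bound lying on a geodesic between π and ρ:
        ∃ σ, NCLe π σ ∧ NCLe ρ σ ∧
          cayleyDist π σ + cayleyDist σ ρ = cayleyDist π ρ,
        -- (4) π is planar on ρ⁻¹:
        cycleCount π + cycleCount ρ + cycleCount (ρ * π⁻¹) =
          Fintype.card I + 2 * jointOrbitCount π ρ ] := by
  have key : cycleCount π + cycleCount ρ + cycleCount (ρ * π⁻¹) =
      Fintype.card I + 2 * jointOrbitCount π ρ → ∃ σ, NCLe π σ ∧ NCLe ρ σ ∧ R σ = R π ⊔ R ρ := by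
    rw [cycleCount_eq, cycleCount_eq, cycleCount_eq, jointOrbitCount_eq]
    intro h
    obtain ⟨σ, h1, h2, h3⟩ := exists_completion ρ _ π rfl
    refine ⟨σ, h1, ?_, h2⟩
    have h4 : delta π ρ = 0 := by
      unfold delta c
      omega
    rw [h4, delta_comm] at h3
    have h5 : R ρ ≤ R σ := by rw [h2]; exact le_sup_right
    unfold delta at h3
    rw [sup_eq_right.2 h5] at h3
    rw [NCLe_iff]
    unfold c at *
    omega
  tfae_have 2 → 1 := fun ⟨σ, h1, h2, _⟩ => ⟨σ, h1, h2⟩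
  tfae_have 3 → 1 := fun ⟨σ, h1, h2, _⟩ => ⟨σ, h1, h2⟩
  tfae_have 1 → 4 := by
    rintro ⟨σ, h1, h2⟩
    have h3 := delta_mono' ρ h1
    have h4 := delta_mono' σ h2
    rw [delta_self, delta_comm] at h4
    have h5 := delta_nonneg π ρ
    have h6 : delta π ρ = 0 := by omega
    rw [cycleCount_eq, cycleCount_eq, cycleCount_eq, jointOrbitCount_eq]
    unfold delta c at h6
    omega
  tfae_have 4 → 2 := by
    intro h
    obtain ⟨σ, h1, h2, h3⟩ := key h
    refine ⟨σ, h1, h2, fun x y => ?_⟩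
    rw [← orbitRel_closure] at h3
    have : σ.SameCycle x y ↔ (R σ) y x := Equiv.Perm.sameCycle_comm
    rw [this, h3]
    exact Iff.rfl
  tfae_have 4 → 3 := by
    intro h
    obtain ⟨σ, h1, h2, h3⟩ := key h
    refine ⟨σ, h1, h2, ?_⟩
    rw [cycleCount_eq, cycleCount_eq, cycleCount_eq, jointOrbitCount_eq, ← h3] at h
    rw [NCLe_iff] at h1 h2
    unfold cayleyDist
    rw [cycleCount_eq, cycleCount_eq, cycleCount_eq]
    have e : cnt (R (ρ * σ⁻¹)) = cnt (R (σ * ρ⁻¹)) := by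
      have := c_inv (ρ * σ⁻¹)
      rw [mul_inv_rev, inv_inv] at this
      exact this.symm
    have b1 := cnt_le_card (R (σ * π⁻¹))
    have b2 := cnt_le_card (R (σ * ρ⁻¹))
    have b3 := cnt_le_card (R (ρ * π⁻¹))
    unfold c at *
    omega
  tfae_finish
end

section
/- Let ξ₁, …, ξₙ be jointly centered Gaussian real random variables. Then E[ξ₁⋯ξₙ] = Σ_{π ∈ P₂(n)} Π_{{k,l} ∈ π} E[ξ_k ξ_l], where the sum is over all pairings of [n] (so the expectation vanishes when n is odd). (Wick/Isserlis formula.) -/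
open MeasureTheory ProbabilityTheory
open scoped Classical

lemma wick_integrable_poly (v : NNReal) (p : Polynomial ℝ) :
    Integrable (fun x => p.eval x) (gaussianReal 0 v) := by
  simp_rw [Polynomial.eval_eq_sum_range]
  refine integrable_finsetSum _ fun k _ => ?_
  refine Integrable.const_mul ?_ _
  have h := (memLp_id_gaussianReal (μ := 0) (v := v) k)
  by_cases hk : k = 0
  · subst hk; simp
  · have := h.integrable_norm_pow (p := k) hk
    refine (integrable_norm_iff (by fun_prop)).1 ?_
    simpa using this

lemma wick_stein_poly (v : NNReal) (p : Polynomial ℝ) :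
    ∫ x, x * p.eval x ∂(gaussianReal 0 v) = v * ∫ x, p.derivative.eval x ∂(gaussianReal 0 v) := by
  by_cases hv : v = 0
  · subst hv; simp [gaussianReal_zero_var]
  have hv' : (v : ℝ) ≠ 0 := by exact_mod_cast hv
  have hd : ∀ x, HasDerivAt (gaussianPDFReal 0 v) (-(x / v) * gaussianPDFReal 0 v x) x := by
    intro x
    rw [gaussianPDFReal_def]
    have h1 : HasDerivAt (fun x : ℝ => -(x - 0) ^ 2 / (2 * v)) (-(x / v)) x := by
      have := (((hasDerivAt_id x).sub_const 0).pow 2).neg.div_const (2 * (v : ℝ))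
      refine this.congr_deriv ?_
      simp; field_simp
    refine (h1.exp.const_mul (√(2 * Real.pi * v))⁻¹).congr_deriv ?_
    ring
  have hint : ∀ q : Polynomial ℝ, Integrable (fun x => q.eval x * gaussianPDFReal 0 v x) := by
    intro q
    have := wick_integrable_poly v q
    rw [gaussianReal_of_var_ne_zero _ hv, gaussianPDF_def, 
      integrable_withDensity_iff_integrable_smul₀' (by fun_prop) (by simp)] at this
    refine this.congr (Filter.Eventually.of_forall fun x => ?_)
    simp [ENNReal.toReal_ofReal (gaussianPDFReal_nonneg 0 v x), mul_comm]
  have key := integral_mul_deriv_eq_deriv_mul_of_integrable (u := fun x => p.eval x)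
    (v := gaussianPDFReal 0 v) (u' := fun x => p.derivative.eval x)
    (v' := fun x => -(x / v) * gaussianPDFReal 0 v x)
    (fun x _ => p.hasDerivAt x) (fun x _ => hd x)
    (by
      refine (hint (Polynomial.C (-(v:ℝ)⁻¹) * Polynomial.X * p)).congr
        (Filter.Eventually.of_forall fun x => ?_)
      simp; ring)
    (hint _) (hint _)
  rw [integral_gaussianReal_eq_integral_smul hv, integral_gaussianReal_eq_integral_smul hv]
  have e1 : ∫ x, gaussianPDFReal 0 v x • (x * p.eval x) =
      (-v) * ∫ x, p.eval x * (-(x / v) * gaussianPDFReal 0 v x) := by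
    rw [← integral_const_mul]
    congr 1; ext x; simp only [smul_eq_mul]; field_simp
  rw [e1, key]
  simp [mul_comm]

section
variable {Ω : Type*} [MeasurableSpace Ω] {μ : Measure Ω} {n : ℕ} {ξ : Fin n → Ω → ℝ}

lemma wick_integrable_prod [IsProbabilityMeasure μ] {ι : Type*} (f : ι → Ω → ℝ)
    (hf : ∀ i, ∀ p : ENNReal, p ≠ ⊤ → MemLp (f i) p μ) (s : Finset ι) :
    Integrable (fun ω => ∏ i ∈ s, f i ω) μ := by
  rcases s.eq_empty_or_nonempty with rfl | hs
  · simp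
  have hc : (s.card : ENNReal) ≠ 0 := by simpa using hs.ne_empty
  have := MemLp.prod' (s := s) (f := f) (p := fun _ => s.card) (μ := μ)
    (fun i _ => hf i _ (by simp))
  rw [Finset.sum_const, nsmul_eq_mul, ENNReal.mul_inv_cancel hc (by simp), inv_one] at this
  exact memLp_one_iff_integrable.1 this

lemma wick_stein (hmeas : ∀ i, Measurable (ξ i)) (hc : ∀ i, ∫ ω, ξ i ω ∂μ = 0)
    (hG : HasGaussianLaw (fun ω i => ξ i ω) μ) (i : Fin n) (s : Finset (Fin n)) :
    ∫ ω, ξ i ω * ∏ j ∈ s, ξ j ω ∂μ =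
      ∑ j ∈ s, (∫ ω, ξ i ω * ξ j ω ∂μ) * ∫ ω, ∏ k ∈ s.erase j, ξ k ω ∂μ := by
  have hP := hG.isProbabilityMeasure
  have hL : ∀ i, ∀ p : ENNReal, p ≠ ⊤ → MemLp (ξ i) p μ := fun i p hp => (hG.eval i).memLp hp
  have hcov : ∀ j, cov[ξ i, ξ j; μ] = ∫ ω, ξ i ω * ξ j ω ∂μ := by
    intro j
    rw [covariance_eq_sub (hL i 2 (by simp)) (hL j 2 (by simp))]
    simp [hc]
  set V : ℝ := Var[ξ i; μ] with hV
  have hVii : cov[ξ i, ξ i; μ] = V := covariance_self (hmeas i).aemeasurable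
  by_cases hV0 : V = 0
  · have h0 : ξ i =ᵐ[μ] 0 := by
      have h2 : ∫ ω, (ξ i ω) ^ 2 ∂μ = 0 := by
        have := hcov i
        rw [hVii, hV0] at this
        simp only [pow_two]
        exact this.symm
      have h3 := (integral_eq_zero_iff_of_nonneg (fun ω => sq_nonneg (ξ i ω))
        (hL i 2 (by simp)).integrable_sq).1 h2
      filter_upwards [h3] with ω hω
      simpa using hω
    have h1 : ∀ g : Ω → ℝ, ∫ ω, ξ i ω * g ω ∂μ = 0 := by
      intro g
      refine integral_eq_zero_of_ae ?_
      filter_upwards [h0] with ω hω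
      simp [hω]
    simp [h1]
  let b : Fin n → ℝ := fun j => cov[ξ i, ξ j; μ] / V
  let Z : Fin n → Ω → ℝ := fun j ω => ξ j ω - b j * ξ i ω
  have hZmeas : ∀ j, Measurable (Z j) := fun j => (hmeas j).sub ((hmeas i).const_mul _)
  have hpair : HasGaussianLaw (fun ω => (fun _ : Unit => ξ i ω, fun j => Z j ω)) μ :=
    hG.map_fun (ContinuousLinearMap.prod
      (ContinuousLinearMap.pi fun _ : Unit => ContinuousLinearMap.proj i)
      (ContinuousLinearMap.pi fun j : Fin n => ContinuousLinearMap.proj j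
        - b j • (ContinuousLinearMap.proj i : (Fin n → ℝ) →L[ℝ] ℝ)))
  have hind0 := HasGaussianLaw.indepFun_of_covariance_eval (X := fun _ : Unit => ξ i) (Y := Z)
    hpair (by
      intro _ j
      have : cov[ξ i, fun ω => ξ j ω - b j * ξ i ω; μ] = 0 := by
        rw [covariance_fun_sub_right (hL i 2 (by simp)) (hL j 2 (by simp))
          ((hL i 2 (by simp)).const_mul _), covariance_const_mul_right, hVii]
        simp only [b]; field_simp; simp
      exact this)
  have hind : IndepFun (ξ i) (fun ω j => Z j ω) μ :=
    hind0.comp (φ := fun f : Unit → ℝ => f ()) (ψ := id) (by fun_prop) measurable_id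
  have hmapX : μ.map (ξ i) = gaussianReal 0 V.toNNReal := by
    rw [(hG.eval i).map_eq_gaussianReal, hc]
  have hZm : Measurable (fun ω j => Z j ω) := measurable_pi_iff.2 hZmeas
  have hlaw : μ.map (fun ω => (ξ i ω, fun j => Z j ω)) =
      (gaussianReal 0 V.toNNReal).prod (μ.map (fun ω j => Z j ω)) := by
    rw [(indepFun_iff_map_prod_eq_prod_map_map (hmeas i).aemeasurable hZm.aemeasurable).1 hind,
      hmapX]
  have hpm : Measurable (fun ω => (ξ i ω, fun j => Z j ω)) := (hmeas i).prodMk hZm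
  have : IsProbabilityMeasure (μ.map (fun ω j => Z j ω)) :=
    Measure.isProbabilityMeasure_map hZm.aemeasurable
  have hξ : ∀ ω j, b j * ξ i ω + Z j ω = ξ j ω := by intro ω j; simp [Z]
  -- transfer of expectations
  have transfer : ∀ F : ℝ × (Fin n → ℝ) → ℝ, Measurable F →
      Integrable (fun ω => F (ξ i ω, fun j => Z j ω)) μ →
      ∫ ω, F (ξ i ω, fun j => Z j ω) ∂μ =
        ∫ z, ∫ x, F (x, z) ∂(gaussianReal 0 V.toNNReal) ∂(μ.map (fun ω j => Z j ω)) := by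
    intro F hF hFi
    have hFi' : Integrable F (μ.map (fun ω => (ξ i ω, fun j => Z j ω))) :=
      (integrable_map_measure hF.aestronglyMeasurable hpm.aemeasurable).2 hFi
    rw [← integral_map (f := F) hpm.aemeasurable hF.aestronglyMeasurable]
    rw [hlaw] at hFi' ⊢
    exact integral_prod_symm _ hFi'
  have hint1 : Integrable (fun ω => ξ i ω * ∏ j ∈ s, ξ j ω) μ := by
    have := wick_integrable_prod (μ := μ) (ι := Option (Fin n)) (fun o => ξ (o.getD i))
      (fun o => hL _) (Finset.insertNone s)
    simpa using this
  have hint2 : ∀ t : Finset (Fin n), Integrable (fun ω => ∏ j ∈ t, ξ j ω) μ :=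
    wick_integrable_prod ξ hL
  have t1 := transfer (fun q => q.1 * ∏ j ∈ s, (b j * q.1 + q.2 j)) (by fun_prop)
    (by simpa only [hξ] using hint1)
  have t2 := transfer (fun q => ∑ j ∈ s, (∏ k ∈ s.erase j, (b k * q.1 + q.2 k)) * b j)
    (by fun_prop)
    (by simpa only [hξ] using integrable_finsetSum _ fun j _ => (hint2 _).mul_const _)
  simp only [hξ] at t1 t2
  have hVnn : ((V.toNNReal : NNReal) : ℝ) = V := Real.coe_toNNReal _ (variance_nonneg _ _)
  have t3 : ∀ z : Fin n → ℝ,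
      ∫ x, x * ∏ j ∈ s, (b j * x + z j) ∂(gaussianReal 0 V.toNNReal) =
      V * ∫ x, ∑ j ∈ s, (∏ k ∈ s.erase j, (b k * x + z k)) * b j
        ∂(gaussianReal 0 V.toNNReal) := by
    intro z
    have := wick_stein_poly V.toNNReal
      (∏ j ∈ s, (Polynomial.C (b j) * Polynomial.X + Polynomial.C (z j)))
    rw [Polynomial.derivative_prod_finset, hVnn] at this
    simpa [Polynomial.eval_prod, Polynomial.eval_finsetSum] using this
  simp only [t3] at t1
  rw [t1, integral_const_mul, ← t2, integral_finsetSum _ fun j _ => (hint2 _).mul_const _,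
    Finset.mul_sum]
  refine Finset.sum_congr rfl fun j _ => ?_
  rw [integral_mul_const, ← hcov]
  simp only [b]; field_simp
end

/-- Partial pairings: involutions moving exactly the points of `s`. -/
noncomputable def wickSum {n : ℕ} (C : Fin n → Fin n → ℝ) (s : Finset (Fin n)) : ℝ :=
  ∑ π ∈ Finset.univ.filter
      (fun π : Equiv.Perm (Fin n) => π * π = 1 ∧ ∀ k, π k ≠ k ↔ k ∈ s),
    ∏ k ∈ Finset.univ.filter (fun k : Fin n => k < π k), C k (π k)

lemma wickSum_rec {n : ℕ} (C : Fin n → Fin n → ℝ) (s : Finset (Fin n)) (i : Fin n) (hi : i ∈ s)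
    (hmin : ∀ k ∈ s, i ≤ k) :
    wickSum C s = ∑ j ∈ s.erase i, C i j * wickSum C ((s.erase i).erase j) := by
  unfold wickSum
  rw [← Finset.sum_fiberwise_of_maps_to (t := s.erase i) (g := fun π : Equiv.Perm (Fin n) => π i)]
  · refine Finset.sum_congr rfl fun j hj => ?_
    rw [Finset.mul_sum]
    have hji : j ≠ i := Finset.ne_of_mem_erase hj
    have hjs : j ∈ s := Finset.mem_of_mem_erase hj
    have hij : i < j := lt_of_le_of_ne (hmin j hjs) hji.symm
    have hinv : ∀ π : Equiv.Perm (Fin n), π * π = 1 → ∀ k, π (π k) = k := fun π h k => by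
      rw [← Equiv.Perm.mul_apply, h, Equiv.Perm.one_apply]
    refine Finset.sum_nbij' (fun π => Equiv.swap i j * π) (fun π => Equiv.swap i j * π)
      ?_ ?_ ?_ ?_ ?_
    · intro π hπ
      simp only [Finset.mem_filter, Finset.mem_univ, true_and] at hπ ⊢
      obtain ⟨⟨h1, h2⟩, h3⟩ := hπ
      have h1' := hinv π h1
      have h4 : π j = i := by rw [← h3, h1']
      constructor
      · ext k
        simp only [Equiv.Perm.mul_apply, Equiv.Perm.one_apply, Equiv.swap_apply_def]
        grind
      · intro k
        have := h2 k
        simp only [Equiv.Perm.mul_apply, Equiv.swap_apply_def, Finset.mem_erase]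
        grind
    · intro σ hσ
      simp only [Finset.mem_filter, Finset.mem_univ, true_and] at hσ ⊢
      obtain ⟨h1, h2⟩ := hσ
      have h1' := hinv σ h1
      have h3 : σ i = i := by have := h2 i; simp at this; exact this
      have h4 : σ j = j := by have := h2 j; simp at this; exact this
      refine ⟨⟨?_, ?_⟩, ?_⟩
      · ext k
        simp only [Equiv.Perm.mul_apply, Equiv.Perm.one_apply, Equiv.swap_apply_def]
        grind
      · intro k
        have := h2 k
        simp only [Equiv.Perm.mul_apply, Equiv.swap_apply_def, Finset.mem_erase] at this ⊢
        grind
      · simp [h3]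
    · intro π _; simp [← mul_assoc]
    · intro π _; simp [← mul_assoc]
    · intro π hπ
      simp only [Finset.mem_filter, Finset.mem_univ, true_and] at hπ ⊢
      obtain ⟨⟨h1, h2⟩, h3⟩ := hπ
      have h1' := hinv π h1
      have h4 : π j = i := by rw [← h3, h1']
      have hE : ∀ k, k ≠ i → k ≠ j → (Equiv.swap i j * π) k = π k := by
        intro k hk1 hk2
        simp only [Equiv.Perm.mul_apply, Equiv.swap_apply_def]
        grind
      have hi' : (Equiv.swap i j * π) i = i := by simp [h3]
      have hj' : (Equiv.swap i j * π) j = j := by simp [h4]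
      have hset : Finset.univ.filter (fun k => k < π k) =
          insert i (Finset.univ.filter (fun k => k < (Equiv.swap i j * π) k)) := by
        ext k
        simp only [Finset.mem_filter, Finset.mem_univ, true_and, Finset.mem_insert]
        by_cases hk1 : k = i
        · simp [hk1, h3, hij]
        by_cases hk2 : k = j
        · rw [hk2, h4, hj']; simp [hji, hij.le]
        rw [hE k hk1 hk2]; simp [hk1]
      rw [hset, Finset.prod_insert (by
        simp only [Finset.mem_filter, hi', lt_irrefl, and_false, not_false_eq_true]), h3]
      congr 1
      refine Finset.prod_congr rfl fun k hk => ?_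
      simp only [Finset.mem_filter, Finset.mem_univ, true_and] at hk
      rw [hE k (by rintro rfl; rw [hi'] at hk; exact lt_irrefl _ hk)
        (by rintro rfl; rw [hj'] at hk; exact lt_irrefl _ hk)]
  · intro π hπ
    simp only [Finset.mem_filter, Finset.mem_univ, true_and] at hπ
    obtain ⟨h1, h2⟩ := hπ
    rw [Finset.mem_erase]
    refine ⟨(h2 i).2 hi, (h2 _).1 ?_⟩
    intro h
    exact (h2 i).2 hi (π.injective h)

theorem wick_main {Ω : Type*} [MeasurableSpace Ω] {μ : Measure Ω} {n : ℕ} {ξ : Fin n → Ω → ℝ}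
    (hmeas : ∀ i, Measurable (ξ i)) (hc : ∀ i, ∫ ω, ξ i ω ∂μ = 0)
    (hG : HasGaussianLaw (fun ω i => ξ i ω) μ) (s : Finset (Fin n)) :
    ∫ ω, ∏ i ∈ s, ξ i ω ∂μ = wickSum (fun k l => ∫ ω, ξ k ω * ξ l ω ∂μ) s := by
  have hP := hG.isProbabilityMeasure
  induction s using Finset.strongInduction with
  | H s ih =>
    rcases s.eq_empty_or_nonempty with rfl | hs
    · have : (Finset.univ.filter
          (fun π : Equiv.Perm (Fin n) => π * π = 1 ∧ ∀ k, π k ≠ k ↔ k ∈ (∅ : Finset (Fin n))))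
          = {1} := by
        ext π
        simp only [Finset.mem_filter, Finset.mem_univ, true_and, Finset.mem_singleton]
        constructor
        · rintro ⟨_, h⟩
          ext k
          have := h k
          simp at this
          simp [this]
        · rintro rfl; simp
      unfold wickSum
      rw [this]
      simp
    · have hi := s.min'_mem hs
      rw [wickSum_rec _ s (s.min' hs) hi (fun k hk => s.min'_le k hk)]
      simp_rw [← Finset.mul_prod_erase s _ hi]
      rw [wick_stein hmeas hc hG]
      refine Finset.sum_congr rfl fun j hj => ?_
      rw [ih]
      exact (Finset.erase_ssubset hj).trans (Finset.erase_ssubset hi)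

theorem stmt17 {Ω : Type*} [MeasurableSpace Ω] (μ : Measure Ω)
    [IsProbabilityMeasure μ] (n : ℕ) (ξ : Fin n → Ω → ℝ)
    (hmeas : ∀ i, Measurable (ξ i))
    (hgauss : ∀ c : Fin n → ℝ, ∃ v : NNReal,
      μ.map (fun ω => ∑ i, c i * ξ i ω) = gaussianReal 0 v) :
    ∫ ω, ∏ i, ξ i ω ∂μ =
      ∑ π ∈ Finset.univ.filter
          (fun π : Equiv.Perm (Fin n) => π * π = 1 ∧ ∀ k, π k ≠ k),
        ∏ k ∈ Finset.univ.filter (fun k : Fin n => k < π k),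
          ∫ ω, ξ k ω * ξ (π k) ω ∂μ := by
  have hm : Measurable (fun ω i => ξ i ω) := measurable_pi_iff.2 hmeas
  have hG : HasGaussianLaw (fun ω i => ξ i ω) μ := by
    refine ⟨isGaussian_of_map_eq_gaussianReal fun L => ?_⟩
    obtain ⟨v, hv⟩ := hgauss (fun i => L (Pi.single i 1))
    refine ⟨0, v, ?_⟩
    rw [Measure.map_map L.continuous.measurable hm, ← hv]
    congr 1
    ext ω
    simp only [Function.comp]
    conv_lhs => rw [← Finset.univ_sum_single (fun i => ξ i ω), map_sum]
    refine Finset.sum_congr rfl fun i _ => ?_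
    have : (Pi.single i (ξ i ω) : Fin n → ℝ) = ξ i ω • Pi.single i 1 := by
      rw [← Pi.single_smul]; simp
    rw [this, map_smul, smul_eq_mul, mul_comm]
  have hc : ∀ i, ∫ ω, ξ i ω ∂μ = 0 := by
    intro i
    obtain ⟨v, hv⟩ := hgauss (Pi.single i 1)
    have h1 : (fun ω => ∑ j, (Pi.single i 1 : Fin n → ℝ) j * ξ j ω) = ξ i := by
      ext ω; simp [Pi.single_apply]
    rw [h1] at hv
    have h2 : ∫ x, x ∂(μ.map (ξ i)) = 0 := by rw [hv]; simp
    rwa [integral_map (hmeas i).aemeasurable (by fun_prop)] at h2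
  have := wick_main hmeas hc hG Finset.univ
  rw [this]
  simp [wickSum]
end
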